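/- (Main theorem, conditional on bounded prime gaps) Fix an integer k ≥ 1 and suppose there exist infinitely many k-tuples of primes p_1 < p_2 < … < p_k with p_k ≤ p_1 + L for some constant L = L_k (Maynard's theorem). Then there exists a constant d_k > 0 such that for infinitely many squarefree integers n with exactly k prime factors, A(n) > d_k · n^{2^{k-1}/k - 1}, where A(n) is the largest absolute value of the coefficients of the n-th cyclotomic polynomial. -/

import Mathlib

/-- `A n` is the largest absolute value of the coefficients of the `n`-th cyclotomic polynomial. -/
noncomputable def A (n : ℕ) : ℕ :=
  (Polynomial.cyclotomic n ℤ).support.sup fun i => ((Polynomial.cyclotomic n ℤ).coeff i).natAbs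

/-!
By Möbius inversion `Φ_n(w) = ∏_{d ∣ n} (w ^ (n / d) - 1) ^ μ(d)`, so `Φ_n` is large at a point `w`
of the unit circle with `w ^ (n / d) ≈ -μ(d)` for every `d ∣ n`: the factors of the numerator are
then close to `-2`, and each of the `2 ^ (k - 1)` factors of the denominator is small.

When all prime factors `r` of the squarefree number `n` are close to an even number `q`, such a
point comes from `z = exp(πi / q)`. Since `z ^ q = -1`, one has `z ^ r = -z ^ (r - q)`, and by
multiplicativity `z ^ e = μ(e) z ^ c` for `e ∣ n`, where `c` is the bounded integer
`∏_{r ∣ e} (r - q)`. Hence `z ^ e = μ(e) + O(1 / q)`, and `w = -μ(n) z` has the required property.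
On the other hand `|Φ_n(w)| ≤ n A(n)`, and `q` has the order of magnitude of `n ^ (1 / k)`.
-/

open ArithmeticFunction Finset Polynomial
open scoped ArithmeticFunction.Moebius Real

lemma cyclotomic_mul_prod_X_pow_div_sub_one (n : ℕ) (R : Type*) [CommRing R] :
    cyclotomic n R * ∏ d ∈ n.divisors with μ d = -1, (X ^ (n / d) - 1) =
      ∏ d ∈ n.divisors with μ d = 1, (X ^ (n / d) - 1) := by
  suffices h : cyclotomic n ℤ * ∏ d ∈ n.divisors with μ d = -1, (X ^ (n / d) - 1) =
      ∏ d ∈ n.divisors with μ d = 1, (X ^ (n / d) - 1) by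
    simpa [Polynomial.map_prod] using congrArg (Polynomial.map (Int.castRingHom R)) h
  apply IsFractionRing.injective ℤ[X] (RatFunc ℤ)
  rw [map_mul, cyclotomic_eq_prod_X_pow_sub_one_pow_moebius,
    Nat.prod_divisorsAntidiagonal fun d e ↦ algebraMap ℤ[X] (RatFunc ℤ) (X ^ e - 1) ^ μ d,
    map_prod, map_prod, prod_filter, prod_filter, ← prod_mul_distrib]
  refine prod_congr rfl fun d hd ↦ ?_
  have hne : algebraMap ℤ[X] (RatFunc ℤ) (X ^ (n / d) - 1) ≠ 0 := by
    have hpos : n / d ≠ 0 := (Nat.div_pos (Nat.divisor_le hd) (Nat.pos_of_mem_divisors hd)).ne'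
    simpa [-map_sub, -map_pow] using (monic_X_pow_sub_C (1 : ℤ) hpos).ne_zero
  obtain h | h | h := moebius_eq_or d <;> simp [h, hne, -map_sub]

lemma sum_divisors_moebius_sq {n : ℕ} (hn : n ≠ 0) :
    ∑ d ∈ n.divisors, μ d ^ 2 = 2 ^ #n.primeFactors := by
  simp only [moebius_sq]
  rw [← sum_filter, Nat.sum_divisors_filter_squarefree hn, Nat.factors_eq]
  simp

lemma card_divisors_filter_moebius_eq_neg_one {n : ℕ} (hn : 1 < n) :
    #{d ∈ n.divisors | μ d = -1} = 2 ^ (#n.primeFactors - 1) := by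
  have hsum : ∑ d ∈ n.divisors, μ d = 0 := by
    rw [← coe_mul_zeta_apply, moebius_mul_coe_zeta, one_apply_ne hn.ne']
  have htwice : (2 * #{d ∈ n.divisors | μ d = -1} : ℤ) = 2 ^ #n.primeFactors := calc
    (2 * #{d ∈ n.divisors | μ d = -1} : ℤ) = ∑ d ∈ n.divisors, (μ d ^ 2 - μ d) := by
      rw [card_filter, Nat.cast_sum, mul_sum]
      refine sum_congr rfl fun d _ ↦ ?_
      obtain h | h | h := moebius_eq_or d <;> simp [h]
    _ = 2 ^ #n.primeFactors := by
      rw [sum_sub_distrib, sum_divisors_moebius_sq (by lia), hsum, sub_zero]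
  have hpos : #n.primeFactors ≠ 0 := (card_pos.2 (Nat.nonempty_primeFactors.2 hn)).ne'
  rw [← pow_sub_one_mul hpos, mul_comm] at htwice
  exact_mod_cast mul_right_cancel₀ two_ne_zero htwice

lemma one_le_norm_eval_cyclotomic_mul_pow {n : ℕ} (hn : 1 < n) {w : ℂ} {ε : ℝ} (hε : ε ≤ 1)
    (hw : ∀ d, d ∣ n → Squarefree d → ‖w ^ (n / d) + μ d‖ ≤ ε) :
    1 ≤ ‖(cyclotomic n ℂ).eval w‖ * ε ^ 2 ^ (#n.primeFactors - 1) := by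
  have hnear {d : ℕ} (hd : d ∈ n.divisors) (hμ : μ d ≠ 0) : ‖w ^ (n / d) + μ d‖ ≤ ε :=
    hw d (Nat.dvd_of_mem_divisors hd) (moebius_ne_zero_iff_squarefree.1 hμ)
  have hnum : 1 ≤ ∏ d ∈ n.divisors with μ d = 1, ‖w ^ (n / d) - 1‖ := by
    refine one_le_prod fun d hd ↦ ?_
    obtain ⟨hd, hμ⟩ := mem_filter.1 hd
    have hle : ‖w ^ (n / d) + 1‖ ≤ ε := by simpa [hμ] using hnear hd (by simp [hμ])
    have htri := norm_sub_le (w ^ (n / d) + 1) (w ^ (n / d) - 1)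
    rw [add_sub_sub_cancel, one_add_one_eq_two, Complex.norm_two] at htri
    linarith
  have hden : ∏ d ∈ n.divisors with μ d = -1, ‖w ^ (n / d) - 1‖ ≤
      ε ^ 2 ^ (#n.primeFactors - 1) := by
    rw [← card_divisors_filter_moebius_eq_neg_one hn, ← prod_const]
    refine prod_le_prod (fun _ _ ↦ norm_nonneg _) fun d hd ↦ ?_
    obtain ⟨hd, hμ⟩ := mem_filter.1 hd
    simpa [hμ, ← sub_eq_add_neg] using hnear hd (by simp [hμ])
  have heval := congrArg (fun f : ℂ[X] ↦ ‖f.eval w‖) (cyclotomic_mul_prod_X_pow_div_sub_one n ℂ)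
  simp only [eval_mul, eval_prod, eval_sub, eval_pow, eval_X, eval_one, norm_mul,
    norm_prod] at heval
  calc 1 ≤ ∏ d ∈ n.divisors with μ d = 1, ‖w ^ (n / d) - 1‖ := hnum
    _ = ‖(cyclotomic n ℂ).eval w‖ * ∏ d ∈ n.divisors with μ d = -1, ‖w ^ (n / d) - 1‖ := heval.symm
    _ ≤ ‖(cyclotomic n ℂ).eval w‖ * ε ^ 2 ^ (#n.primeFactors - 1) := by gcongr

lemma pow_prod_eq_neg_one_pow_mul_zpow_prod_sub {ι K : Type*} [Field K] {z : K} {q : ℕ}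
    (hz : z ≠ 0) (hzq : z ^ q = -1) (hq : Even q) {s : Finset ι} {f : ι → ℕ}
    (hf : ∀ i ∈ s, Odd (f i)) :
    z ^ (∏ i ∈ s, f i) = (-1) ^ #s * z ^ (∏ i ∈ s, ((f i : ℤ) - q)) := by
  induction s using Finset.cons_induction with
  | empty => simp
  | cons a s ha ih =>
    obtain ⟨hfa, hfs⟩ := (forall_mem_cons ha _).1 hf
    have hprod_odd : Odd (∏ i ∈ s, f i) := prod_induction f Odd (fun _ _ ↦ Odd.mul) odd_one hfs
    have hdiff_odd : Odd ((f a : ℤ) - q) := hfa.natCast.sub_even hq.natCast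
    have hza : z ^ f a = -z ^ ((f a : ℤ) - q) := by
      rw [zpow_sub₀ hz, zpow_natCast, zpow_natCast, hzq, div_neg, div_one, neg_neg]
    calc z ^ (∏ i ∈ cons a s ha, f i) = (z ^ f a) ^ (∏ i ∈ s, f i) := by rw [prod_cons, pow_mul]
      _ = -(z ^ (∏ i ∈ s, f i)) ^ ((f a : ℤ) - q) := by
        rw [hza, hprod_odd.neg_pow, ← zpow_natCast, ← zpow_natCast, zpow_comm]
      _ = -((-1) ^ #s * z ^ (∏ i ∈ s, ((f i : ℤ) - q))) ^ ((f a : ℤ) - q) := by rw [ih hfs]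
      _ = -(-1) ^ #s * z ^ ((∏ i ∈ s, ((f i : ℤ) - q)) * ((f a : ℤ) - q)) := by
        rw [mul_zpow, ← zpow_natCast (-1 : K), zpow_comm, hdiff_odd.neg_one_zpow, zpow_mul, neg_mul]
      _ = (-1) ^ #(cons a s ha) * z ^ (∏ i ∈ cons a s ha, ((f i : ℤ) - q)) := by
        rw [card_cons, prod_cons, mul_comm (∏ i ∈ s, _), pow_succ, mul_neg_one]

lemma moebius_eq_neg_one_pow_card_primeFactors {n : ℕ} (hn : Squarefree n) :
    μ n = (-1) ^ #n.primeFactors := by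
  rw [moebius_apply_of_squarefree hn,
    ← (cardDistinctFactors_eq_cardFactors_iff_squarefree hn.ne_zero).2 hn]
  rfl

lemma pow_eq_moebius_mul_zpow_prod_sub {K : Type*} [Field K] {z : K} {q e : ℕ} (hz : z ≠ 0)
    (hzq : z ^ q = -1) (hq : Even q) (he : Squarefree e) (hodd : Odd e) :
    z ^ e = μ e * z ^ (∏ r ∈ e.primeFactors, ((r : ℤ) - q)) := by
  have hpow := pow_prod_eq_neg_one_pow_mul_zpow_prod_sub hz hzq hq fun r hr ↦
    hodd.of_dvd_nat (Nat.dvd_of_mem_primeFactors hr)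
  rw [Nat.prod_primeFactors_of_squarefree he] at hpow
  simpa [moebius_eq_neg_one_pow_card_primeFactors he] using hpow

lemma norm_exp_mul_I_zpow_sub_one_le (t : ℝ) (c : ℤ) :
    ‖Complex.exp (t * Complex.I) ^ c - 1‖ ≤ |(c : ℝ)| * |t| := by
  have harg : c * (t * Complex.I) = Complex.I * ((c * t : ℝ) : ℂ) := by
    push_cast
    ring
  rw [← Complex.exp_int_mul, harg, ← abs_mul]
  exact Real.norm_exp_I_mul_ofReal_sub_one_le

lemma exists_pow_eq_neg_one_norm_zpow_sub_one_le {q : ℕ} (hq : q ≠ 0) :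
    ∃ z : ℂ, ‖z‖ = 1 ∧ z ^ q = -1 ∧ ∀ c : ℤ, ‖z ^ c - 1‖ ≤ |(c : ℝ)| * (π / q) := by
  refine ⟨Complex.exp ((π / q : ℝ) * Complex.I), Complex.norm_exp_ofReal_mul_I _, ?_, fun c ↦ ?_⟩
  · rw [← Complex.exp_nat_mul, ← Complex.exp_pi_mul_I]
    push_cast
    field_simp
  · have hle := norm_exp_mul_I_zpow_sub_one_le (π / q) c
    rwa [abs_of_nonneg (a := π / q) (by positivity)] at hle

lemma abs_prod_le_pow_card_of_subset {ι R : Type*} [CommRing R] [LinearOrder R]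
    [IsStrictOrderedRing R] {s t : Finset ι} (hst : s ⊆ t) {f : ι → R} {M : R} (hM : 1 ≤ M)
    (hf : ∀ i ∈ t, |f i| ≤ M) : |∏ i ∈ s, f i| ≤ M ^ #t := calc
  |∏ i ∈ s, f i| ≤ ∏ _i ∈ s, M := by
    rw [abs_prod]
    exact prod_le_prod (fun _ _ ↦ abs_nonneg _) fun i hi ↦ hf i (hst hi)
  _ = M ^ #s := prod_const M
  _ ≤ M ^ #t := pow_le_pow_right₀ hM (card_le_card hst)

lemma norm_moebius {n : ℕ} (hn : Squarefree n) : ‖(μ n : ℂ)‖ = 1 := by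
  rw [Complex.norm_intCast]
  exact_mod_cast abs_moebius_eq_one_of_squarefree hn

lemma neg_moebius_mul_pow_mul_moebius {d e : ℕ} (hde : Squarefree (d * e)) (he : Odd e) :
    (-μ (d * e)) ^ e * μ e = -μ d := by
  have hpow : (-μ (d * e)) ^ e = -μ (d * e) := by
    obtain ⟨m, rfl⟩ := he
    rw [pow_succ, pow_mul, neg_sq, moebius_sq_eq_one_of_squarefree hde, one_pow, one_mul]
  rw [hpow, isMultiplicative_moebius.map_mul_of_coprime (Nat.coprime_of_squarefree_mul hde),
    neg_mul, mul_assoc, ← sq, moebius_sq_eq_one_of_squarefree hde.of_mul_right, mul_one]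

lemma exists_norm_pow_div_add_moebius_le {n q : ℕ} {M : ℝ} (hn : Squarefree n) (hodd : Odd n)
    (hq0 : q ≠ 0) (hq : Even q) (hM : 1 ≤ M) (hnear : ∀ r ∈ n.primeFactors, |(r : ℝ) - q| ≤ M) :
    ∃ w : ℂ, ‖w‖ = 1 ∧ ∀ d, d ∣ n → ‖w ^ (n / d) + μ d‖ ≤ π * M ^ #n.primeFactors / q := by
  obtain ⟨z, hz, hzq, hzpow⟩ := exists_pow_eq_neg_one_norm_zpow_sub_one_le hq0
  have hz0 : z ≠ 0 := norm_ne_zero_iff.1 (by simp [hz])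
  have hznear {e : ℕ} (he : e ∣ n) :
      ‖z ^ (∏ r ∈ e.primeFactors, ((r : ℤ) - q)) - 1‖ ≤ π * M ^ #n.primeFactors / q := by
    have hprod : |((∏ r ∈ e.primeFactors, ((r : ℤ) - q) : ℤ) : ℝ)| ≤ M ^ #n.primeFactors := by
      push_cast
      exact abs_prod_le_pow_card_of_subset (Nat.primeFactors_mono he hn.ne_zero) hM hnear
    calc _ ≤ _ := hzpow _
      _ ≤ M ^ #n.primeFactors * (π / q) := by gcongr
      _ = π * M ^ #n.primeFactors / q := by ring
  refine ⟨-μ n * z, by rw [norm_mul, norm_neg, norm_moebius hn, hz, one_mul], ?_⟩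
  rintro d ⟨e, rfl⟩
  have hd0 : 0 < d := Nat.pos_of_ne_zero (left_ne_zero_of_mul hn.ne_zero)
  have he_odd : Odd e := hodd.of_dvd_nat (dvd_mul_left e d)
  have hwe : (-μ (d * e) * z) ^ e + μ d =
      -μ d * (z ^ (∏ r ∈ e.primeFactors, ((r : ℤ) - q)) - 1) := by
    have hsign : (-μ (d * e) : ℂ) ^ e * μ e = -μ d := by
      exact_mod_cast neg_moebius_mul_pow_mul_moebius hn he_odd
    rw [mul_pow, pow_eq_moebius_mul_zpow_prod_sub hz0 hzq hq hn.of_mul_right he_odd, ← mul_assoc,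
      hsign]
    ring
  rw [Nat.mul_div_cancel_left e hd0, hwe, norm_mul, norm_neg, norm_moebius hn.of_mul_left, one_mul]
  exact hznear (dvd_mul_left e d)

lemma norm_eval_le_of_norm_coeff_le {R : Type*} [SeminormedRing R] [NormOneClass R] (f : R[X])
    {z : R} (hz : ‖z‖ ≤ 1) {B : ℝ} (hB : ∀ i, ‖f.coeff i‖ ≤ B) :
    ‖f.eval z‖ ≤ (f.natDegree + 1) * B := by
  rw [eval_eq_sum_range]
  calc ‖∑ i ∈ range (f.natDegree + 1), f.coeff i * z ^ i‖
      ≤ ∑ _i ∈ range (f.natDegree + 1), B := by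
        refine norm_sum_le_of_le _ fun i _ ↦ (norm_mul_le _ _).trans ?_
        have hzi : ‖z ^ i‖ ≤ 1 := (norm_pow_le z i).trans (pow_le_one₀ (norm_nonneg z) hz)
        exact (mul_le_of_le_one_right (norm_nonneg _) hzi).trans (hB i)
    _ = (f.natDegree + 1) * B := by simp

lemma norm_coeff_cyclotomic_le_A (n i : ℕ) : ‖(cyclotomic n ℂ).coeff i‖ ≤ A n := by
  have hint : ((cyclotomic n ℤ).coeff i).natAbs ≤ A n := by
    by_cases hi : i ∈ (cyclotomic n ℤ).support
    · exact le_sup (f := fun i ↦ ((cyclotomic n ℤ).coeff i).natAbs) hi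
    · simp [notMem_support_iff.1 hi]
  rw [← map_cyclotomic_int n ℂ, coeff_map, eq_intCast, Complex.norm_intCast, ← Int.cast_abs,
    Int.abs_eq_natAbs]
  exact_mod_cast hint

lemma norm_eval_cyclotomic_le_mul_A {n : ℕ} (hn : 1 < n) {z : ℂ} (hz : ‖z‖ ≤ 1) :
    ‖(cyclotomic n ℂ).eval z‖ ≤ n * A n := by
  have hdeg : ((cyclotomic n ℂ).natDegree + 1 : ℝ) ≤ n := by
    rw [natDegree_cyclotomic]
    exact_mod_cast n.totient_lt hn
  exact (norm_eval_le_of_norm_coeff_le _ hz (norm_coeff_cyclotomic_le_A n)).trans (by gcongr)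

lemma div_pow_le_mul_A {n q : ℕ} {M : ℝ} (hn1 : 1 < n) (hn : Squarefree n) (hodd : Odd n)
    (hq : Even q) (hM : 1 ≤ M) (hnear : ∀ r ∈ n.primeFactors, |(r : ℝ) - q| ≤ M)
    (hqM : π * M ^ #n.primeFactors ≤ q) :
    (q / (π * M ^ #n.primeFactors)) ^ 2 ^ (#n.primeFactors - 1) ≤ n * A n := by
  have hq0 : 0 < (q : ℝ) := lt_of_lt_of_le (by positivity) hqM
  obtain ⟨w, hw, hwpow⟩ :=
    exists_norm_pow_div_add_moebius_le hn hodd (by exact_mod_cast hq0.ne') hq hM hnear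
  have hone := one_le_norm_eval_cyclotomic_mul_pow hn1 ((div_le_one hq0).2 hqM)
    fun d hd _ ↦ hwpow d hd
  rw [← inv_div, inv_pow, inv_le_iff_one_le_mul₀ (by positivity)]
  exact hone.trans (by gcongr; exact norm_eval_cyclotomic_le_mul_A hn1 hw.le)

lemma lt_pow_card_primeFactors {n b : ℕ} (hn1 : 1 < n) (hn : Squarefree n)
    (hb : ∀ r ∈ n.primeFactors, r < b) : n < b ^ #n.primeFactors := calc
  n = ∏ r ∈ n.primeFactors, r := (Nat.prod_primeFactors_of_squarefree hn).symm
  _ < ∏ _r ∈ n.primeFactors, b :=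
    prod_lt_prod_of_nonempty (fun _ ↦ Nat.pos_of_mem_primeFactors) hb
      (Nat.nonempty_primeFactors.2 hn1)
  _ = b ^ #n.primeFactors := prod_const b

lemma rpow_div_lt_pow_of_lt_pow {x y : ℝ} {k m : ℕ} (hx : 0 ≤ x) (hy : 0 ≤ y) (hk : k ≠ 0)
    (hm : m ≠ 0) (hxy : x < y ^ k) : x ^ (m / k : ℝ) < y ^ m := calc
  x ^ (m / k : ℝ) < (y ^ k) ^ (m / k : ℝ) := Real.rpow_lt_rpow hx hxy (by positivity)
  _ = y ^ m := by
    rw [← Real.rpow_natCast y k, ← Real.rpow_mul hy, mul_div_cancel₀ _ (by positivity),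
      Real.rpow_natCast]

lemma inv_mul_rpow_lt_A {n q : ℕ} {M : ℝ} (hn1 : 1 < n) (hn : Squarefree n) (hodd : Odd n)
    (hq : Even q) (hM : 1 ≤ M) (hnear : ∀ r ∈ n.primeFactors, |(r : ℝ) - q| ≤ M)
    (hqM : π * M ^ #n.primeFactors ≤ q) :
    ((2 * π * M ^ #n.primeFactors) ^ 2 ^ (#n.primeFactors - 1))⁻¹ *
      (n : ℝ) ^ ((2 ^ (#n.primeFactors - 1) : ℝ) / #n.primeFactors - 1) < A n := by
  have hlower := div_pow_le_mul_A hn1 hn hodd hq hM hnear hqM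
  have hk : #n.primeFactors ≠ 0 := (card_pos.2 (Nat.nonempty_primeFactors.2 hn1)).ne'
  have hMq : M < q := calc
    M ≤ M ^ #n.primeFactors := le_self_pow₀ hM hk
    _ < π * M ^ #n.primeFactors := lt_mul_left (by positivity) (by linarith [Real.pi_gt_three])
    _ ≤ q := hqM
  have hfactor_lt : ∀ r ∈ n.primeFactors, r < 2 * q := fun r hr ↦ by
    have hrq : (r : ℝ) < 2 * q := by linarith [(abs_le.1 (hnear r hr)).2]
    exact_mod_cast hrq
  have hn_lt : (n : ℝ) < (2 * q) ^ #n.primeFactors := by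
    exact_mod_cast lt_pow_card_primeFactors hn1 hn hfactor_lt
  have hrpow := rpow_div_lt_pow_of_lt_pow (m := 2 ^ (#n.primeFactors - 1)) n.cast_nonneg
    (by positivity) hk (by positivity) hn_lt
  push_cast at hrpow
  have hn0 : (0 : ℝ) < n := by positivity
  rw [Real.rpow_sub_one hn0.ne', inv_mul_lt_iff₀ (by positivity), div_lt_iff₀ hn0]
  calc (n : ℝ) ^ ((2 ^ (#n.primeFactors - 1) : ℝ) / #n.primeFactors)
      < (2 * q) ^ 2 ^ (#n.primeFactors - 1) := hrpow
    _ = (2 * π * M ^ #n.primeFactors) ^ 2 ^ (#n.primeFactors - 1) *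
        (q / (π * M ^ #n.primeFactors)) ^ 2 ^ (#n.primeFactors - 1) := by
      rw [← mul_pow]
      congr 1
      field_simp
    _ ≤ (2 * π * M ^ #n.primeFactors) ^ 2 ^ (#n.primeFactors - 1) * (n * A n) := by gcongr
    _ = (2 * π * M ^ #n.primeFactors) ^ 2 ^ (#n.primeFactors - 1) * A n * n := by ring

lemma inv_mul_rpow_lt_A_of_le_minFac_add {n L : ℕ} (hn1 : 1 < n) (hn : Squarefree n)
    (hL : ∀ r ∈ n.primeFactors, r ≤ n.minFac + L)
    (hlarge : π * (L + 1) ^ #n.primeFactors ≤ n.minFac) :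
    ((2 * π * (L + 1) ^ #n.primeFactors) ^ 2 ^ (#n.primeFactors - 1))⁻¹ *
      (n : ℝ) ^ ((2 ^ (#n.primeFactors - 1) : ℝ) / #n.primeFactors - 1) < A n := by
  have hM : (1 : ℝ) ≤ L + 1 := by simp
  have hodd : Odd n := by
    have htwo_lt : (2 : ℝ) < n.minFac := calc
      2 < π := by linarith [Real.pi_gt_three]
      _ ≤ π * (L + 1) ^ #n.primeFactors :=
        le_mul_of_one_le_right Real.pi_pos.le (one_le_pow₀ hM)
      _ ≤ n.minFac := hlarge
    rw [← Nat.not_even_iff_odd, even_iff_two_dvd, ← Nat.minFac_eq_two_iff]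
    exact_mod_cast htwo_lt.ne'
  have hq : Even (n.minFac + 1) := (hodd.of_dvd_nat n.minFac_dvd).add_one
  refine inv_mul_rpow_lt_A hn1 hn hodd hq hM (fun r hr ↦ ?_) (hlarge.trans (by simp))
  have hlow : (n.minFac : ℝ) ≤ r := by
    exact_mod_cast Nat.minFac_le_of_dvd (Nat.prime_of_mem_primeFactors hr).two_le
      (Nat.dvd_of_mem_primeFactors hr)
  have hup : (r : ℝ) ≤ n.minFac + L := by exact_mod_cast hL r hr
  push_cast
  rw [abs_le]
  constructor <;> linarith

lemma exists_squarefree_primeFactors_eq {S : Finset ℕ} (hS : ∀ p ∈ S, p.Prime) :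
    ∃ n : ℕ, Squarefree n ∧ n.primeFactors = S := by
  refine ⟨∏ p ∈ S, p, squarefree_prod_of_pairwise_isCoprime (fun p hp q hq hpq ↦ ?_)
    fun p hp ↦ (hS p hp).prime.squarefree, Nat.primeFactors_prod hS⟩
  exact Nat.coprime_iff_isRelPrime.1 ((Nat.coprime_primes (hS p hp) (hS q hq)).2 hpq)

theorem main_lower_bound (k : ℕ) (hk : 1 ≤ k)
    (hmaynard : ∃ L : ℕ, ∀ N : ℕ, ∃ p : ℕ → ℕ,
      (∀ i, 1 ≤ i → i ≤ k → (p i).Prime) ∧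
      (∀ i j, 1 ≤ i → i < j → j ≤ k → p i < p j) ∧
      N < p 1 ∧ p k ≤ p 1 + L) :
    ∃ d : ℝ, 0 < d ∧ ∀ N : ℕ, ∃ n : ℕ, N < n ∧ Squarefree n ∧
      n.primeFactors.card = k ∧
      (A n : ℝ) > d * (n : ℝ) ^ ((2 ^ (k - 1) : ℝ) / k - 1) := by
  obtain ⟨L, hL⟩ := hmaynard
  refine ⟨((2 * π * (L + 1) ^ k) ^ 2 ^ (k - 1))⁻¹, by positivity, fun N ↦ ?_⟩
  obtain ⟨p, hprime, hmono, hlarge, hgap⟩ := hL (max N ⌈π * (L + 1) ^ k⌉₊)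
  obtain ⟨hN, hceil⟩ := max_lt_iff.1 hlarge
  have hp : StrictMonoOn p (Icc 1 k : Finset ℕ) := fun i hi j hj hij ↦
    hmono i j (mem_Icc.1 hi).1 hij (mem_Icc.1 hj).2
  obtain ⟨n, hn, hpf⟩ := exists_squarefree_primeFactors_eq (S := (Icc 1 k).image p)
    (forall_mem_image.2 fun i hi ↦ hprime i (mem_Icc.1 hi).1 (mem_Icc.1 hi).2)
  have hcard : #n.primeFactors = k := by rw [hpf, card_image_of_injOn hp.injOn]; simp
  have hn1 : 1 < n := Nat.nonempty_primeFactors.1 (card_pos.1 (by lia))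
  have hcluster : ∀ r ∈ n.primeFactors, p 1 ≤ r ∧ r ≤ p 1 + L := by
    rw [hpf, forall_mem_image]
    exact fun i hi ↦ ⟨hp.monotoneOn (left_mem_Icc.2 hk) hi (mem_Icc.1 hi).1,
      (hp.monotoneOn hi (right_mem_Icc.2 hk) (mem_Icc.1 hi).2).trans hgap⟩
  have hp1 : p 1 ≤ n.minFac := (hcluster _ (by simp [hn1.ne', hn.ne_zero, Nat.minFac_dvd])).1
  have hbound := inv_mul_rpow_lt_A_of_le_minFac_add (L := L) hn1 hn
    (fun r hr ↦ (hcluster r hr).2.trans (by gcongr))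
    (by rw [hcard]; exact (Nat.lt_of_ceil_lt hceil).le.trans (by exact_mod_cast hp1))
  rw [hcard] at hbound
  exact ⟨n, (hN.trans_le hp1).trans_le (Nat.minFac_le (by lia)), hn, hcard, hbound⟩
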